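/- Let Z be a unique factorization domain, let f ∈ Z[X] be irreducible in Z[X] of positive degree, and let s ≥ 1 be an integer. Then f(X^{2^s}) is not irreducible in Z[X] if and only if f(X^2) is not irreducible in Z[X], or s ≥ 2 and f(X^4) is not irreducible in Z[X]. -/

import Mathlib

open Polynomial

/-!
Let `x` be a root of `f` over the fraction field `K`. By Gauss's lemma and comparison of degrees,
`f(X ^ n)` is irreducible exactly when `X ^ n - x` is irreducible over `K(x)`, so it suffices to
show that irreducibility of `X ^ 4 - a` over a field `L` forces that of `X ^ 2 ^ s - a`.
If `b = √a` is not in `L` and `a = (u + v b) ^ 4` in `L(b)`, then `(u + v b) ^ 2 = ± b`; comparing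
coefficients gives `a = -4 u ^ 4`, for which `X ^ 4 - a` factors. Hence `a = b ^ 2` is not a fourth
power in `L(b)`, so `b` is neither a square nor `-4` times a fourth power there. Thus `X ^ 4 - b` is
again irreducible over `L(b)`, and one proceeds by induction on `s` along the tower of square roots.
-/

section QuadraticExtension

open IntermediateField

variable {K : Type*} [Field K]

lemma eq_zero_of_add_mul_eq_zero_of_notMem_range {A : Type*} [Ring A] [Nontrivial A]
    [Algebra K A] {x : A} (hx : x ∉ (algebraMap K A).range) {u v : K}
    (h : algebraMap K A u + algebraMap K A v * x = 0) : u = 0 ∧ v = 0 := by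
  have hv : v = 0 := by
    by_contra hv
    refine hx ⟨-(v⁻¹ * u), ?_⟩
    have hvx : algebraMap K A v * x = -algebraMap K A u := (neg_eq_of_add_eq_zero_right h).symm
    rw [map_neg, map_mul, ← mul_neg, ← hvx, ← mul_assoc, ← map_mul, inv_mul_cancel₀ hv, map_one,
      one_mul]
  subst hv
  simpa using h

variable {E : Type*} [Field E] [Algebra K E]

lemma exists_eq_add_mul_gen_of_natDegree_minpoly_eq_two {x : E}
    (hx : (minpoly K x).natDegree = 2) (y : K⟮x⟯) :
    ∃ u v : K, y = algebraMap K K⟮x⟯ u + algebraMap K K⟮x⟯ v * AdjoinSimple.gen K x := by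
  have hint : IsIntegral K x :=
    minpoly.ne_zero_iff.1 <| ne_zero_of_natDegree_gt (hx ▸ zero_lt_two)
  obtain ⟨p, hp, rfl⟩ := (adjoin.powerBasis hint).exists_eq_aeval y
  rw [adjoin.powerBasis_dim, hx] at hp
  obtain ⟨v, u, rfl⟩ := exists_eq_X_add_C_of_natDegree_le_one (Nat.le_of_lt_succ hp)
  exact ⟨u, v, by simp [add_comm]⟩

lemma gen_pow_eq_of_minpoly_eq_X_pow_sub_C {n : ℕ} {a : K} {x : E}
    (hx : minpoly K x = X ^ n - C a) :
    AdjoinSimple.gen K x ^ n = algebraMap K K⟮x⟯ a := by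
  simpa [minpoly_gen, hx, sub_eq_zero] using minpoly.aeval K (AdjoinSimple.gen K x)

lemma exists_neg_four_mul_pow_four_eq_of_pow_four_eq {a : K} {x : E}
    (hx : minpoly K x = X ^ 2 - C a) {y : K⟮x⟯} (hy : y ^ 4 = algebraMap K K⟮x⟯ a) :
    ∃ u : K, -4 * u ^ 4 = a := by
  set g := AdjoinSimple.gen K x
  have hdeg : (minpoly K x).natDegree = 2 := by rw [hx, natDegree_X_pow_sub_C]
  have hg_sq : g ^ 2 = algebraMap K K⟮x⟯ a := gen_pow_eq_of_minpoly_eq_X_pow_sub_C hx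
  have hg_range : g ∉ (algebraMap K K⟮x⟯).range := by
    rw [← minpoly.natDegree_eq_one_iff, minpoly_gen, hdeg]
    decide
  obtain ⟨ε, hε, hyε⟩ : ∃ ε : K, ε ^ 2 = 1 ∧ y ^ 2 = algebraMap K K⟮x⟯ ε * g := by
    have hyg : (y ^ 2) ^ 2 = g ^ 2 := by rw [hg_sq, ← hy, ← pow_mul]
    rcases sq_eq_sq_iff_eq_or_eq_neg.1 hyg with h | h
    · exact ⟨1, one_pow 2, by simpa using h⟩
    · exact ⟨-1, neg_one_sq, by simpa using h⟩
  obtain ⟨u, v, rfl⟩ := exists_eq_add_mul_gen_of_natDegree_minpoly_eq_two hdeg y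
  obtain ⟨h_const, h_gen⟩ : u ^ 2 + v ^ 2 * a = 0 ∧ 2 * u * v - ε = 0 := by
    refine eq_zero_of_add_mul_eq_zero_of_notMem_range hg_range ?_
    simp only [map_add, map_sub, map_mul, map_pow, map_ofNat, ← hg_sq]
    linear_combination hyε
  refine ⟨u, ?_⟩
  linear_combination -4 * u ^ 2 * h_const + a * (2 * u * v + ε) * h_gen + a * hε

end QuadraticExtension

section TwoPowerRoots

universe u

variable {K : Type u} [Field K]

lemma not_irreducible_X_pow_four_sub_C_neg_four_mul_pow_four (b : K) :
    ¬ Irreducible (X ^ 4 - C (-4 * b ^ 4)) := by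
  have not_isUnit (c d : K) : ¬ IsUnit (X ^ 2 + C c * X + C d) := fun hu ↦ by
    have hdeg : (X ^ 2 + C c * X + C d).natDegree = 2 := by compute_degree!
    simp [natDegree_eq_zero_of_isUnit hu] at hdeg
  have factorization : X ^ 4 - C (-4 * b ^ 4) =
      (X ^ 2 + C (2 * b) * X + C (2 * b ^ 2)) * (X ^ 2 + C (-2 * b) * X + C (2 * b ^ 2)) := by
    simp only [map_mul, map_pow, map_neg, map_ofNat]
    ring
  intro h
  rcases h.isUnit_or_isUnit factorization with hu | hu <;> exact not_isUnit _ _ hu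

lemma X_pow_four_sub_C_irreducible_iff {a : K} :
    Irreducible (X ^ 4 - C a) ↔ (∀ b, b ^ 2 ≠ a) ∧ ∀ b, -4 * b ^ 4 ≠ a := by
  constructor
  · refine fun h ↦ ⟨pow_ne_of_irreducible_X_pow_sub_C h (by norm_num) (by norm_num), ?_⟩
    rintro b rfl
    exact not_irreducible_X_pow_four_sub_C_neg_four_mul_pow_four b h
  · rintro ⟨ha_sq, ha_four⟩
    refine X_pow_mul_sub_C_irreducible (n := 2)
      (X_pow_sub_C_irreducible_of_prime Nat.prime_two ha_sq) fun E _ _ x hx ↦ ?_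
    refine X_pow_sub_C_irreducible_of_prime Nat.prime_two fun y hy ↦ ?_
    obtain ⟨u, hu⟩ := exists_neg_four_mul_pow_four_eq_of_pow_four_eq hx (y := y) <| by
      rw [← gen_pow_eq_of_minpoly_eq_X_pow_sub_C hx, ← hy, ← pow_mul]
    exact ha_four u hu

open IntermediateField in
lemma X_pow_four_sub_C_gen_irreducible {E : Type*} [Field E] [Algebra K E] {a : K} {x : E}
    (ha : Irreducible (X ^ 4 - C a)) (hx : minpoly K x = X ^ 2 - C a) :
    Irreducible (X ^ 4 - C (AdjoinSimple.gen K x)) := by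
  have not_fourth_power (y : K⟮x⟯) : y ^ 4 ≠ algebraMap K K⟮x⟯ a := fun hy ↦ by
    obtain ⟨u, hu⟩ := exists_neg_four_mul_pow_four_eq_of_pow_four_eq hx hy
    exact (X_pow_four_sub_C_irreducible_iff.1 ha).2 u hu
  rw [← gen_pow_eq_of_minpoly_eq_X_pow_sub_C hx] at not_fourth_power
  refine X_pow_four_sub_C_irreducible_iff.2 ⟨fun y hy ↦ ?_, fun y hy ↦ ?_⟩
  · exact not_fourth_power y (by rw [← hy]; ring)
  · exact not_fourth_power (2 * y ^ 2) (by rw [← hy]; ring)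

lemma X_pow_two_pow_sub_C_irreducible {a : K} (ha : Irreducible (X ^ 4 - C a)) (k : ℕ) :
    Irreducible (X ^ 2 ^ (k + 2) - C a) := by
  induction k generalizing K with
  | zero => simpa using ha
  | succ k ih =>
    have h_sq : Irreducible (X ^ 2 - C a) :=
      X_pow_sub_C_irreducible_of_prime Nat.prime_two (X_pow_four_sub_C_irreducible_iff.1 ha).1
    rw [Nat.succ_add, pow_succ]
    exact X_pow_mul_sub_C_irreducible h_sq fun E _ _ x hx ↦
      ih (X_pow_four_sub_C_gen_irreducible ha hx)

end TwoPowerRoots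

section Composition

variable {K : Type*} [Field K]

lemma natDegree_le_finrank_of_irreducible_of_aeval_eq_zero {A : Type*} [Ring A] [Nontrivial A]
    [Algebra K A] [FiniteDimensional K A] {p : K[X]} (hp : Irreducible p) {β : A}
    (hβ : aeval β p = 0) : p.natDegree ≤ Module.finrank K A := by
  rw [← natDegree_mul_leadingCoeff_inv p hp.ne_zero, minpoly.eq_of_irreducible hp hβ]
  exact minpoly.natDegree_le β

open IntermediateField

variable {E : Type*} [Field E] [Algebra K E] {x : E} {g : K[X]}

lemma natDegree_comp_le_of_irreducible_of_dvd (h : Irreducible ((minpoly K x).comp g))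
    {q : K⟮x⟯[X]} (hq : Irreducible q)
    (hqg : q ∣ g.map (algebraMap K K⟮x⟯) - C (AdjoinSimple.gen K x)) :
    ((minpoly K x).comp g).natDegree ≤ (minpoly K x).natDegree * q.natDegree := by
  have hx : IsIntegral K x := minpoly.ne_zero_iff.1 fun h0 ↦ h.ne_zero (by rw [h0, zero_comp])
  have : Fact (Irreducible q) := ⟨hq⟩
  have : FiniteDimensional K K⟮x⟯ := adjoin.finiteDimensional hx
  let B := AdjoinRoot.powerBasis hq.ne_zero
  have : FiniteDimensional K⟮x⟯ (AdjoinRoot q) := B.finite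
  have : Module.Free K⟮x⟯ (AdjoinRoot q) := .of_basis B.basis
  have : FiniteDimensional K (AdjoinRoot q) := FiniteDimensional.trans K K⟮x⟯ _
  set β := AdjoinRoot.root q
  have hgβ : aeval β g = algebraMap K⟮x⟯ (AdjoinRoot q) (AdjoinSimple.gen K x) := by
    have := aeval_eq_zero_of_dvd_aeval_eq_zero hqg (AdjoinRoot.eval₂_root q)
    simpa [sub_eq_zero] using this
  have hroot : aeval β ((minpoly K x).comp g) = 0 := by
    rw [aeval_comp, hgβ, aeval_algebraMap_apply, ← minpoly_gen, minpoly.aeval, map_zero]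
  calc ((minpoly K x).comp g).natDegree
      ≤ Module.finrank K (AdjoinRoot q) :=
        natDegree_le_finrank_of_irreducible_of_aeval_eq_zero h hroot
    _ = Module.finrank K K⟮x⟯ * Module.finrank K⟮x⟯ (AdjoinRoot q) :=
        (Module.finrank_mul_finrank K K⟮x⟯ _).symm
    _ = (minpoly K x).natDegree * q.natDegree := by
        rw [adjoin.finrank hx, B.finrank, AdjoinRoot.powerBasis_dim]

lemma irreducible_map_sub_C_gen_of_irreducible_comp (h : Irreducible ((minpoly K x).comp g)) :
    Irreducible (g.map (algebraMap K K⟮x⟯) - C (AdjoinSimple.gen K x)) := by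
  set G := g.map (algebraMap K K⟮x⟯) - C (AdjoinSimple.gen K x) with hG
  have hG_deg : G.natDegree = g.natDegree := by rw [hG, natDegree_sub_C, natDegree_map]
  have hcomp_pos : 0 < (minpoly K x).natDegree * g.natDegree := by
    simpa only [natDegree_comp] using h.natDegree_pos
  have hmin_pos : 0 < (minpoly K x).natDegree := Nat.pos_of_mul_pos_right hcomp_pos
  have hG_pos : 0 < G.natDegree := hG_deg ▸ Nat.pos_of_mul_pos_left hcomp_pos
  have hG_ne : G ≠ 0 := ne_zero_of_natDegree_gt hG_pos
  obtain ⟨q, hq, hqG⟩ := WfDvdMonoid.exists_irreducible_factor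
    (not_isUnit_of_natDegree_pos G hG_pos) hG_ne
  have hdeg : G.natDegree ≤ q.natDegree := by
    have := natDegree_comp_le_of_irreducible_of_dvd h hq hqG
    rw [natDegree_comp, ← hG_deg] at this
    exact Nat.le_of_mul_le_mul_left this hmin_pos
  exact (associated_of_dvd_of_natDegree_le hqG hG_ne hdeg).irreducible hq

end Composition

section Expand

lemma irreducible_expand_two_pow_of_monic {K : Type*} [Field K] {f : K[X]} (hf : f.Monic)
    (h : Irreducible (expand K 4 f)) (k : ℕ) : Irreducible (expand K (2 ^ (k + 2)) f) := by
  refine irreducible_comp hf (monic_X_pow _) (of_irreducible_expand four_ne_zero h) ?_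
  rintro E _ _ x rfl
  simpa using X_pow_two_pow_sub_C_irreducible
    (by simpa using irreducible_map_sub_C_gen_of_irreducible_comp h) k

lemma irreducible_expand_mul_C_leadingCoeff_inv_iff {K : Type*} [Field K] {f : K[X]} {n : ℕ}
    (hn : 0 < n) :
    Irreducible (expand K n (f * C f.leadingCoeff⁻¹)) ↔ Irreducible (expand K n f) := by
  rw [map_mul, expand_C, ← leadingCoeff_expand hn, irreducible_mul_leadingCoeff_inv]

lemma irreducible_expand_two_pow_of_field {K : Type*} [Field K] {f : K[X]}
    (h : Irreducible (expand K 4 f)) (k : ℕ) : Irreducible (expand K (2 ^ (k + 2)) f) := by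
  have hf : f ≠ 0 := (of_irreducible_expand four_ne_zero h).ne_zero
  rw [← irreducible_expand_mul_C_leadingCoeff_inv_iff (by positivity)] at h ⊢
  exact irreducible_expand_two_pow_of_monic (monic_mul_leadingCoeff_inv hf) h k

lemma isPrimitive_expand {R : Type*} [CommSemiring R] {f : R[X]} (hf : f.IsPrimitive) {n : ℕ}
    (hn : 0 < n) : (expand R n f).IsPrimitive := by
  intro r hr
  rw [C_dvd_iff_dvd_coeff] at hr
  refine hf r ((C_dvd_iff_dvd_coeff r f).2 fun i ↦ ?_)
  rw [← coeff_expand_mul hn]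
  exact hr (i * n)

variable {Z : Type*} [CommRing Z] [IsDomain Z] [IsGCDMonoid Z] {f : Z[X]}

lemma irreducible_expand_two_pow (h : Irreducible (expand Z 4 f)) (k : ℕ) :
    Irreducible (expand Z (2 ^ (k + 2)) f) := by
  have hf : Irreducible f := of_irreducible_expand four_ne_zero h
  rcases eq_or_ne f.natDegree 0 with hdeg | hdeg
  · rwa [eq_C_of_natDegree_eq_zero hdeg, expand_C, ← eq_C_of_natDegree_eq_zero hdeg]
  · have hprim {n : ℕ} (hn : 0 < n) : (expand Z n f).IsPrimitive :=
      isPrimitive_expand (hf.isPrimitive hdeg) hn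
    rw [(hprim (by positivity)).irreducible_iff_irreducible_map_fraction_map
      (K := FractionRing Z), map_expand] at h ⊢
    exact irreducible_expand_two_pow_of_field h k

lemma irreducible_expand_two_pow_iff {s : ℕ} (hs : 2 ≤ s) :
    Irreducible (expand Z (2 ^ s) f) ↔ Irreducible (expand Z 4 f) := by
  obtain ⟨k, rfl⟩ := Nat.exists_eq_add_of_le' hs
  refine ⟨fun h ↦ ?_, fun h ↦ irreducible_expand_two_pow h k⟩
  rw [pow_add, expand_mul] at h
  exact of_irreducible_expand (by positivity) h

end Expand

theorem stmt8_general {Z : Type*} [CommRing Z] [IsDomain Z] [IsGCDMonoid Z] (f : Z[X])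
    (s : ℕ) (hs : 1 ≤ s) :
    ¬ Irreducible (f.comp (X ^ 2 ^ s)) ↔
      (¬ Irreducible (f.comp (X ^ 2)) ∨ (2 ≤ s ∧ ¬ Irreducible (f.comp (X ^ 4)))) := by
  simp only [← expand_eq_comp_X_pow]
  rcases hs.eq_or_lt with rfl | hs2
  · simp
  · have h_two_of_four (h : Irreducible (expand Z 4 f)) : Irreducible (expand Z 2 f) := by
      rw [show 4 = 2 * 2 from rfl, expand_mul] at h
      exact of_irreducible_expand two_ne_zero h
    rw [irreducible_expand_two_pow_iff hs2]
    tauto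

theorem stmt8 {Z : Type*} [CommRing Z] [IsDomain Z] [UniqueFactorizationMonoid Z]
    (f : Polynomial Z) (hf : Irreducible f) (hdeg : 0 < f.natDegree)
    (s : ℕ) (hs : 1 ≤ s) :
    ¬ Irreducible (f.comp (X ^ 2 ^ s)) ↔
      (¬ Irreducible (f.comp (X ^ 2)) ∨ (2 ≤ s ∧ ¬ Irreducible (f.comp (X ^ 4)))) :=
  stmt8_general f s hs
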